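/- For every ε ∈ (0, 1/4) there exists a C^∞ diffeomorphism φ_ε of ℝ² with the following properties: φ_ε maps the unit square [0,1]² onto itself and preserves two-dimensional Lebesgue measure; φ_ε equals the identity on the complement of [ε, 1−ε]² (in particular on [0,1]² \ [ε,1−ε]²); and φ_ε restricted to [2ε, 1−2ε]² coincides with the rotation by angle π/2 about the center (1/2, 1/2) of the square. -/

import Mathlib

open MeasureTheory Set

open Filter
open scoped ContDiff Topology Real

/-!
Let `N` be a gauge of the plane which is invariant under the quarter turn, and parametrise its unit
curve by `γ` with `γ ∧ γ' = 1`. In the coordinates `(ρ, s) ↦ ρ • γ s` the area form is `ρ dρ ds`, so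
every twist `(ρ, s) ↦ (ρ, s + g ρ)` preserves area; it is the quarter turn where `g ρ` is a quarter
of the period of `γ` and the identity where `g ρ = 0`. For even `n` large enough, the `ℓⁿ` gauge has
balls squeezed between any two given concentric squares, and a cut-off function `g` of this gauge
turns the inner square while fixing the complement of the outer one.
-/

section Calculus

theorem contDiffAt_of_comp_right {𝕜 E F G : Type*} [RCLike 𝕜]
    [NormedAddCommGroup E] [NormedSpace 𝕜 E] [CompleteSpace E]
    [NormedAddCommGroup F] [NormedSpace 𝕜 F] [NormedAddCommGroup G] [NormedSpace 𝕜 G]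
    {n : WithTop ℕ∞} {f : F → G} {P : E → F} {x : E} (hn : n ≠ 0) (hP : ContDiffAt 𝕜 n P x)
    (hP' : (fderiv 𝕜 P x).IsInvertible) (hf : ContDiffAt 𝕜 n (f ∘ P) x) :
    ContDiffAt 𝕜 n f (P x) := by
  obtain ⟨e, he⟩ := hP'
  have hderiv : HasFDerivAt P (e : E →L[𝕜] F) x := he ▸ (hP.differentiableAt hn).hasFDerivAt
  have hcomp : ContDiffAt 𝕜 n ((f ∘ P) ∘ hP.localInverse hderiv hn) (P x) :=
    ContDiffAt.comp _ (by rwa [hP.localInverse_apply_image hderiv hn])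
      (hP.to_localInverse hderiv hn)
  refine hcomp.congr_of_eventuallyEq ?_
  filter_upwards [(hP.hasStrictFDerivAt' hderiv hn).eventually_right_inverse] with y hy
  exact (congrArg f hy).symm

theorem isInvertible_of_det_ne_zero {𝕜 E : Type*} [NontriviallyNormedField 𝕜] [CompleteSpace 𝕜]
    [NormedAddCommGroup E] [NormedSpace 𝕜 E] [FiniteDimensional 𝕜 E] {L : E →L[𝕜] E}
    (hL : L.det ≠ 0) : L.IsInvertible :=
  ⟨L.toContinuousLinearEquivOfDetNeZero hL, L.coe_toContinuousLinearEquivOfDetNeZero hL⟩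

theorem contDiff_symm_of_det_fderiv_ne_zero {𝕜 E : Type*} [RCLike 𝕜]
    [NormedAddCommGroup E] [NormedSpace 𝕜 E] [FiniteDimensional 𝕜 E] {n : WithTop ℕ∞}
    (hn : n ≠ 0) (φ : E ≃ E) (hφ : ContDiff 𝕜 n φ) (hdet : ∀ x, (fderiv 𝕜 φ x).det ≠ 0) :
    ContDiff 𝕜 n φ.symm := by
  have := FiniteDimensional.complete 𝕜 E
  refine contDiff_iff_contDiffAt.2 fun y => ?_
  obtain ⟨x, rfl⟩ := φ.surjective y
  refine contDiffAt_of_comp_right hn hφ.contDiffAt (isInvertible_of_det_ne_zero (hdet x)) ?_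
  rw [φ.symm_comp_self]
  exact contDiffAt_id

theorem measurePreserving_of_abs_det_fderiv_eq_one {E : Type*} [NormedAddCommGroup E]
    [NormedSpace ℝ E] [FiniteDimensional ℝ E] [MeasurableSpace E] [BorelSpace E] (μ : Measure E)
    [μ.IsAddHaarMeasure] {f : E → E} (hbij : f.Bijective) (hf : Differentiable ℝ f)
    (hdet : ∀ x, |(fderiv ℝ f x).det| = 1) : MeasurePreserving f μ μ := by
  refine ⟨hf.continuous.measurable, ?_⟩
  simpa [hdet, hbij.surjective.range_eq] using
    map_withDensity_abs_det_fderiv_eq_addHaar μ nullMeasurableSet_univ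
      (fun x _ => (hf x).hasFDerivAt.hasFDerivWithinAt) hbij.injective.injOn

theorem det_prod_eq {R : Type*} [CommRing R] (L : R × R →ₗ[R] R × R) :
    LinearMap.det L = (L (1, 0)).1 * (L (0, 1)).2 - (L (1, 0)).2 * (L (0, 1)).1 := by
  rw [← LinearMap.det_toMatrix (Module.Basis.finTwoProd R), Matrix.det_fin_two]
  simp [LinearMap.toMatrix_apply, mul_comm]

end Calculus

section Direction

/-- The rotation of the plane by `π / 2` about the origin. -/
def quarterTurn (p : ℝ × ℝ) : ℝ × ℝ := (-p.2, p.1)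

theorem contDiff_quarterTurn : ContDiff ℝ ∞ quarterTurn := contDiff_snd.neg.prodMk contDiff_fst

theorem quarterTurn_smul (c : ℝ) (p : ℝ × ℝ) : quarterTurn (c • p) = c • quarterTurn p := by
  simp [quarterTurn]

theorem quarterTurn_iterate_four (p : ℝ × ℝ) : quarterTurn^[4] p = p := by
  simp [quarterTurn]

/-- The unit vector of the plane at angle `θ` from the first axis. -/
noncomputable def direction (θ : ℝ) : ℝ × ℝ := (Real.cos θ, Real.sin θ)

theorem contDiff_direction : ContDiff ℝ ∞ direction := Real.contDiff_cos.prodMk Real.contDiff_sin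

theorem direction_ne_zero (θ : ℝ) : direction θ ≠ 0 := fun h => by
  have hcos : Real.cos θ = 0 := congrArg Prod.fst h
  have hsin : Real.sin θ = 0 := congrArg Prod.snd h
  simpa [hcos, hsin] using Real.sin_sq_add_cos_sq θ

theorem direction_add_pi_div_two (θ : ℝ) : direction (θ + π / 2) = quarterTurn (direction θ) := by
  simp [direction, quarterTurn, Real.cos_add_pi_div_two, Real.sin_add_pi_div_two]

theorem hasDerivAt_direction (θ : ℝ) : HasDerivAt direction (quarterTurn (direction θ)) θ :=
  (Real.hasDerivAt_cos θ).prodMk (Real.hasDerivAt_sin θ)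

/-- The polar angle in `(-π, π]` of a point of the plane, with value `0` at the origin. -/
noncomputable def polarAngle (p : ℝ × ℝ) : ℝ := (Complex.equivRealProd.symm p).arg

theorem polarAngle_smul_direction {c : ℝ} (hc : 0 < c) (θ : ℝ) :
    (polarAngle (c • direction θ) : Real.Angle) = θ := by
  have hz : Complex.equivRealProd.symm (c • direction θ) =
      c * (Real.Angle.cos θ + Real.Angle.sin θ * Complex.I) := by
    apply Complex.ext <;> simp [direction]
  rw [polarAngle, hz, Complex.arg_mul_cos_add_sin_mul_I_coe_angle hc]

theorem exists_smul_direction_polarAngle (p : ℝ × ℝ) :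
    ∃ c : ℝ, 0 ≤ c ∧ c • direction (polarAngle p) = p :=
  ⟨‖Complex.equivRealProd.symm p‖, norm_nonneg _,
    Prod.ext (Complex.norm_mul_cos_arg _) (Complex.norm_mul_sin_arg _)⟩

end Direction

/-- A gauge of the plane invariant under the quarter turn: a positively homogeneous function,
smooth and positive away from the origin. Its unit ball need not be convex. -/
structure QuarterTurnGauge where
  toFun : ℝ × ℝ → ℝ
  continuous : Continuous toFun
  contDiffAt : ∀ p, p ≠ 0 → ContDiffAt ℝ ∞ toFun p
  pos : ∀ p, p ≠ 0 → 0 < toFun p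
  map_smul : ∀ c, 0 ≤ c → ∀ p, toFun (c • p) = c * toFun p
  map_quarterTurn : ∀ p, toFun (quarterTurn p) = toFun p

namespace QuarterTurnGauge

instance : CoeFun QuarterTurnGauge fun _ => ℝ × ℝ → ℝ := ⟨toFun⟩

variable (N : QuarterTurnGauge)

theorem map_zero : N 0 = 0 := by
  simpa using N.map_smul 0 le_rfl 0

/-- The polar equation of the curve `N = 1`. -/
noncomputable def radius (θ : ℝ) : ℝ := (N (direction θ))⁻¹

theorem radius_pos (θ : ℝ) : 0 < N.radius θ := inv_pos.2 (N.pos _ (direction_ne_zero θ))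

theorem contDiff_radius : ContDiff ℝ ∞ N.radius :=
  contDiff_iff_contDiffAt.2 fun θ =>
    ((N.contDiffAt _ (direction_ne_zero θ)).comp θ contDiff_direction.contDiffAt).inv
      (N.pos _ (direction_ne_zero θ)).ne'

theorem periodic_radius : N.radius.Periodic (π / 2) := fun θ => by
  rw [radius, direction_add_pi_div_two, N.map_quarterTurn, radius]

theorem apply_smul_radius_smul_direction {c : ℝ} (hc : 0 ≤ c) (θ : ℝ) :
    N (c • N.radius θ • direction θ) = c := by
  rw [N.map_smul c hc, N.map_smul _ (N.radius_pos θ).le, radius,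
    inv_mul_cancel₀ (N.pos _ (direction_ne_zero θ)).ne', mul_one]

/-- Twice the area swept by the curve `N = 1` between the angles `0` and `θ`. -/
noncomputable def area (θ : ℝ) : ℝ := ∫ t in (0 : ℝ)..θ, N.radius t ^ 2

/-- The area parameter of the curve `N = 1` at the end of the first quadrant. -/
noncomputable def quarterPeriod : ℝ := N.area (π / 2)

theorem radius_sq_pos (θ : ℝ) : 0 < N.radius θ ^ 2 := pow_pos (N.radius_pos θ) 2

theorem periodic_radius_sq : Function.Periodic (fun θ => N.radius θ ^ 2) (π / 2) :=
  N.periodic_radius.comp (· ^ 2)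

theorem intervalIntegrable_radius_sq (x y : ℝ) :
    IntervalIntegrable (fun θ => N.radius θ ^ 2) volume x y :=
  (N.contDiff_radius.continuous.pow 2).intervalIntegrable x y

theorem hasDerivAt_area (θ : ℝ) : HasDerivAt N.area (N.radius θ ^ 2) θ :=
  ((N.contDiff_radius.continuous.pow 2).integral_hasStrictDerivAt 0 θ).hasDerivAt

theorem contDiff_area : ContDiff ℝ ∞ N.area := by
  rw [contDiff_infty_iff_deriv, funext fun θ => (N.hasDerivAt_area θ).deriv]
  exact ⟨fun θ => (N.hasDerivAt_area θ).differentiableAt, N.contDiff_radius.pow 2⟩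

theorem area_add_pi_div_two (θ : ℝ) : N.area (θ + π / 2) = N.area θ + N.quarterPeriod := by
  simpa [area, quarterPeriod] using
    N.periodic_radius_sq.intervalIntegral_add_eq_add 0 θ N.intervalIntegrable_radius_sq

theorem strictMono_area : StrictMono N.area :=
  strictMono_of_deriv_pos fun θ => (N.hasDerivAt_area θ).deriv ▸ N.radius_sq_pos θ

theorem surjective_area : N.area.Surjective :=
  N.contDiff_area.continuous.surjective
    (N.periodic_radius_sq.tendsto_atTop_intervalIntegral_of_pos'
      (N.intervalIntegrable_radius_sq _ _) N.radius_sq_pos Real.pi_div_two_pos)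
    (N.periodic_radius_sq.tendsto_atBot_intervalIntegral_of_pos'
      (N.intervalIntegrable_radius_sq _ _) N.radius_sq_pos Real.pi_div_two_pos)

/-- `area` as a homeomorphism of the line, used to invert it. -/
noncomputable def areaHomeomorph : ℝ ≃ₜ ℝ :=
  (N.strictMono_area.orderIsoOfSurjective N.area N.surjective_area).toHomeomorph

/-- The polar angle of the point of the curve `N = 1` with area parameter `s`. -/
noncomputable def angle (s : ℝ) : ℝ := N.areaHomeomorph.symm s

theorem area_angle (s : ℝ) : N.area (N.angle s) = s := N.areaHomeomorph.apply_symm_apply s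

theorem angle_area (θ : ℝ) : N.angle (N.area θ) = θ := N.areaHomeomorph.symm_apply_apply θ

theorem angle_add_quarterPeriod (s : ℝ) : N.angle (s + N.quarterPeriod) = N.angle s + π / 2 := by
  rw [← N.angle_area (N.angle s + π / 2), area_add_pi_div_two, area_angle]

theorem contDiff_angle : ContDiff ℝ ∞ N.angle :=
  N.areaHomeomorph.contDiff_symm_deriv (fun θ => (N.radius_sq_pos θ).ne') N.hasDerivAt_area
    N.contDiff_area

theorem hasDerivAt_angle (s : ℝ) : HasDerivAt N.angle (N.radius (N.angle s) ^ 2)⁻¹ s :=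
  (N.hasDerivAt_area _).of_local_left_inverse N.contDiff_angle.continuous.continuousAt
    (N.radius_sq_pos _).ne' (.of_forall N.area_angle)

/-- The curve `N = 1`, parametrised by `area`. -/
noncomputable def curve (s : ℝ) : ℝ × ℝ := N.radius (N.angle s) • direction (N.angle s)

theorem contDiff_curve : ContDiff ℝ ∞ N.curve :=
  (N.contDiff_radius.comp N.contDiff_angle).smul (contDiff_direction.comp N.contDiff_angle)

theorem curve_area (θ : ℝ) : N.curve (N.area θ) = N.radius θ • direction θ := by
  rw [curve, angle_area]

theorem curve_add_quarterPeriod (s : ℝ) :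
    N.curve (s + N.quarterPeriod) = quarterTurn (N.curve s) := by
  rw [curve, angle_add_quarterPeriod, N.periodic_radius, direction_add_pi_div_two,
    ← quarterTurn_smul, curve]

theorem curve_wedge_deriv_curve (s : ℝ) :
    (N.curve s).1 * (deriv N.curve s).2 - (N.curve s).2 * (deriv N.curve s).1 = 1 := by
  have hradius := (N.contDiff_radius.differentiable (by simp) (N.angle s)).hasDerivAt.comp s
    (N.hasDerivAt_angle s)
  have hdirection := (hasDerivAt_direction (N.angle s)).scomp s (N.hasDerivAt_angle s)
  have hcurve : deriv N.curve s = _ := (hradius.smul hdirection).deriv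
  have hr := mul_inv_cancel₀ (N.radius_sq_pos (N.angle s)).ne'
  rw [hcurve]
  simp only [curve, direction, quarterTurn, Function.comp_apply, Prod.smul_fst, Prod.smul_snd,
    Prod.fst_add, Prod.snd_add, smul_eq_mul]
  linear_combination hr + N.radius (N.angle s) ^ 2 * (N.radius (N.angle s) ^ 2)⁻¹ *
    Real.sin_sq_add_cos_sq (N.angle s)

theorem periodic_curve_area_add (t : ℝ) :
    Function.Periodic (fun θ => N.curve (N.area θ + t)) (2 * π) := by
  have hquarter (θ : ℝ) :
      N.curve (N.area (θ + π / 2) + t) = quarterTurn (N.curve (N.area θ + t)) := by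
    rw [area_add_pi_div_two, add_right_comm, curve_add_quarterPeriod]
  intro θ
  calc N.curve (N.area (θ + 2 * π) + t)
      = N.curve (N.area (θ + π / 2 + π / 2 + π / 2 + π / 2) + t) := by ring_nf
    _ = quarterTurn^[4] (N.curve (N.area θ + t)) := by simp only [hquarter, Function.iterate_succ,
          Function.comp_apply, Function.iterate_zero, id]
    _ = N.curve (N.area θ + t) := quarterTurn_iterate_four _

/-- Generalised polar coordinates `(ρ, s)`, with `N` as radial coordinate and the area parameter of
the curve `N = 1` as angular coordinate. -/
noncomputable def polar (q : ℝ × ℝ) : ℝ × ℝ := q.1 • N.curve q.2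

theorem contDiff_polar : ContDiff ℝ ∞ N.polar :=
  contDiff_fst.smul (N.contDiff_curve.comp contDiff_snd)

theorem det_fderiv_polar (q : ℝ × ℝ) : (fderiv ℝ N.polar q).det = q.1 := by
  have hcurve : HasFDerivAt (fun q : ℝ × ℝ => N.curve q.2) _ q :=
    (N.contDiff_curve.differentiable (by simp) q.2).hasDerivAt.hasFDerivAt.comp q hasFDerivAt_snd
  have hpolar : HasFDerivAt N.polar _ q := hasFDerivAt_fst.smul hcurve
  have hradial : fderiv ℝ N.polar q (1, 0) = N.curve q.2 := by
    rw [hpolar.fderiv]; simp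
  have hangular : fderiv ℝ N.polar q (0, 1) = q.1 • deriv N.curve q.2 := by
    rw [hpolar.fderiv]; simp
  rw [ContinuousLinearMap.det, det_prod_eq, ContinuousLinearMap.coe_coe, hradial, hangular,
    Prod.smul_fst, Prod.smul_snd, smul_eq_mul, smul_eq_mul]
  linear_combination q.1 * N.curve_wedge_deriv_curve q.2

theorem apply_polar {q : ℝ × ℝ} (hq : 0 ≤ q.1) : N (N.polar q) = q.1 :=
  N.apply_smul_radius_smul_direction hq _

theorem polar_apply_area_polarAngle (p : ℝ × ℝ) : N.polar (N p, N.area (polarAngle p)) = p := by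
  obtain ⟨c, hc, hp⟩ := exists_smul_direction_polarAngle p
  have hN : N p = c * N (direction (polarAngle p)) := by rw [← N.map_smul c hc, hp]
  rw [polar, curve_area, hN, radius, smul_smul,
    mul_inv_cancel_right₀ (N.pos _ (direction_ne_zero _)).ne', hp]

theorem exists_polar_eq {p : ℝ × ℝ} (hp : p ≠ 0) : ∃ q : ℝ × ℝ, 0 < q.1 ∧ N.polar q = p :=
  ⟨_, N.pos p hp, N.polar_apply_area_polarAngle p⟩

/-- The twist `(ρ, s) ↦ (ρ, s + g ρ)` in the coordinates `polar`. -/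
noncomputable def twist (g : ℝ → ℝ) (p : ℝ × ℝ) : ℝ × ℝ :=
  N.polar (N p, N.area (polarAngle p) + g (N p))

variable {g : ℝ → ℝ} {p : ℝ × ℝ}

theorem twist_zero : N.twist g 0 = 0 := by
  simp [twist, polar, map_zero]

theorem twist_polar {q : ℝ × ℝ} (hq : 0 < q.1) :
    N.twist g (N.polar q) = N.polar (q.1, q.2 + g q.1) := by
  have hangle : (polarAngle (N.polar q) : Real.Angle) = N.angle q.2 := by
    rw [polar, curve, smul_smul]
    exact polarAngle_smul_direction (mul_pos hq (N.radius_pos _)) _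
  have hcurve : N.curve (N.area (polarAngle (N.polar q)) + g q.1) = N.curve (q.2 + g q.1) := by
    have hlift := congrArg (N.periodic_curve_area_add (g q.1)).lift hangle
    simpa only [Real.Angle.coe, Function.Periodic.lift_coe, area_angle] using! hlift
  rw [twist, N.apply_polar hq.le]
  exact congrArg (q.1 • ·) hcurve

theorem twist_neg_twist (g : ℝ → ℝ) (p : ℝ × ℝ) : N.twist (-g) (N.twist g p) = p := by
  obtain rfl | hp := eq_or_ne p 0
  · rw [twist_zero, twist_zero]
  · obtain ⟨q, hq, rfl⟩ := N.exists_polar_eq hp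
    have hq' : 0 < ((q.1, q.2 + g q.1) : ℝ × ℝ).1 := hq
    rw [N.twist_polar hq, N.twist_polar hq', Pi.neg_apply, add_neg_cancel_right]

/-- `twist` as a permutation of the plane. -/
noncomputable def twistEquiv (g : ℝ → ℝ) : ℝ × ℝ ≃ ℝ × ℝ where
  toFun := N.twist g
  invFun := N.twist (-g)
  left_inv := N.twist_neg_twist g
  right_inv p := by simpa using N.twist_neg_twist (-g) p

theorem twist_eq_self (h : g (N p) = 0) : N.twist g p = p := by
  rw [twist, h, add_zero, polar_apply_area_polarAngle]

theorem twist_eq_quarterTurn (h : g (N p) = N.quarterPeriod) : N.twist g p = quarterTurn p := by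
  rw [twist, h, polar, curve_add_quarterPeriod, ← quarterTurn_smul]
  exact congrArg quarterTurn (N.polar_apply_area_polarAngle p)

theorem twist_comp_polar_eventuallyEq {q : ℝ × ℝ} (hq : 0 < q.1) :
    N.twist g ∘ N.polar =ᶠ[𝓝 q] N.polar ∘ fun q => (q.1, q.2 + g q.1) := by
  filter_upwards [continuousAt_fst.eventually_const_lt hq] with q' hq'
  exact N.twist_polar hq'

theorem contDiffAt_twist (hg : ContDiff ℝ ∞ g) (hp : p ≠ 0) : ContDiffAt ℝ ∞ (N.twist g) p := by
  obtain ⟨q, hq, rfl⟩ := N.exists_polar_eq hp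
  refine contDiffAt_of_comp_right (by simp) N.contDiff_polar.contDiffAt
    (isInvertible_of_det_ne_zero (by rw [det_fderiv_polar]; exact hq.ne')) ?_
  have hshear : ContDiff ℝ ∞ fun q : ℝ × ℝ => (q.1, q.2 + g q.1) :=
    contDiff_fst.prodMk (contDiff_snd.add (hg.comp contDiff_fst))
  exact (N.contDiff_polar.comp hshear).contDiffAt.congr_of_eventuallyEq
    (N.twist_comp_polar_eventuallyEq hq)

theorem det_fderiv_twist_of_ne_zero (hg : ContDiff ℝ ∞ g) (hp : p ≠ 0) :
    (fderiv ℝ (N.twist g) p).det = 1 := by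
  obtain ⟨q, hq, rfl⟩ := N.exists_polar_eq hp
  have hshear : HasFDerivAt (fun q : ℝ × ℝ => (q.1, q.2 + g q.1)) _ q :=
    hasFDerivAt_fst.prodMk (hasFDerivAt_snd.add
      ((hg.differentiable (by simp) q.1).hasDerivAt.hasFDerivAt.comp q hasFDerivAt_fst))
  have hdet_shear : (fderiv ℝ (fun q : ℝ × ℝ => (q.1, q.2 + g q.1)) q).det = 1 := by
    rw [hshear.fderiv, ContinuousLinearMap.det, det_prod_eq]
    simp
  have hpolar := N.contDiff_polar.differentiable (by simp)
  have hchain : fderiv ℝ (N.twist g) (N.polar q) ∘L fderiv ℝ N.polar q =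
      fderiv ℝ N.polar (q.1, q.2 + g q.1) ∘L fderiv ℝ (fun q : ℝ × ℝ => (q.1, q.2 + g q.1)) q := by
    rw [← fderiv_comp q ((N.contDiffAt_twist hg hp).differentiableAt (by simp)) (hpolar q),
      (N.twist_comp_polar_eventuallyEq hq).fderiv_eq,
      fderiv_comp q (hpolar _) hshear.differentiableAt]
  have hdet := congrArg ContinuousLinearMap.det hchain
  simp only [ContinuousLinearMap.det, ContinuousLinearMap.toLinearMap_comp,
    LinearMap.det_comp] at hdet
  simp only [det_fderiv_polar, hdet_shear, mul_one] at hdet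
  exact mul_right_cancel₀ hq.ne' (hdet.trans (one_mul _).symm)

section Plateau

variable {α : ℝ}

theorem contDiff_twist (hg : ContDiff ℝ ∞ g) (hα : 0 < α) (hgα : ∀ ρ ≤ α, g ρ = N.quarterPeriod) :
    ContDiff ℝ ∞ (N.twist g) := by
  refine contDiff_iff_contDiffAt.2 fun p => ?_
  obtain rfl | hp := eq_or_ne p 0
  · have hnear : ∀ᶠ p in 𝓝 0, N p < α :=
      N.continuous.continuousAt.eventually_lt_const (N.map_zero.trans_lt hα)
    refine contDiff_quarterTurn.contDiffAt.congr_of_eventuallyEq ?_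
    filter_upwards [hnear] with p hp
    exact N.twist_eq_quarterTurn (hgα _ hp.le)
  · exact N.contDiffAt_twist hg hp

theorem det_fderiv_twist (hg : ContDiff ℝ ∞ g) (hα : 0 < α)
    (hgα : ∀ ρ ≤ α, g ρ = N.quarterPeriod) (p : ℝ × ℝ) : (fderiv ℝ (N.twist g) p).det = 1 := by
  have hcont : Continuous fun p => (fderiv ℝ (N.twist g) p).det :=
    ContinuousLinearMap.continuous_det.comp
      ((N.contDiff_twist hg hα hgα).continuous_fderiv (by simp))
  exact congrFun (hcont.ext_on (dense_compl_singleton 0) continuous_const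
    fun p hp => N.det_fderiv_twist_of_ne_zero hg hp) p

end Plateau

/-- For `α < β`, a smooth function equal to the quarter period on `(-∞, α]` and to `0` on
`[β, ∞)`. -/
noncomputable def cutoff (α β ρ : ℝ) : ℝ :=
  N.quarterPeriod * (1 - Real.smoothTransition ((ρ - α) / (β - α)))

variable {α β ρ : ℝ}

theorem contDiff_cutoff : ContDiff ℝ ∞ (N.cutoff α β) :=
  contDiff_const.mul (contDiff_const.sub (Real.smoothTransition.contDiff.comp
    ((contDiff_id.sub contDiff_const).div_const _)))

theorem cutoff_of_le (hαβ : α < β) (hρ : ρ ≤ α) : N.cutoff α β ρ = N.quarterPeriod := by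
  rw [cutoff, Real.smoothTransition.zero_of_nonpos
    (div_nonpos_of_nonpos_of_nonneg (sub_nonpos.2 hρ) (sub_pos.2 hαβ).le), sub_zero, mul_one]

theorem cutoff_of_ge (hαβ : α < β) (hρ : β ≤ ρ) : N.cutoff α β ρ = 0 := by
  rw [cutoff, Real.smoothTransition.one_of_one_le
    ((one_le_div (sub_pos.2 hαβ)).2 (sub_le_sub_right hρ α)), sub_self, mul_zero]

theorem exists_areaPreserving_eq_quarterTurn (hα : 0 < α) (hαβ : α < β) :
    ∃ φ : ℝ × ℝ ≃ ℝ × ℝ, ContDiff ℝ ∞ φ ∧ ContDiff ℝ ∞ φ.symm ∧ MeasurePreserving φ ∧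
      (∀ p, β ≤ N p → φ p = p) ∧ ∀ p, N p ≤ α → φ p = quarterTurn p := by
  let φ := N.twistEquiv (N.cutoff α β)
  have hplateau : ∀ ρ ≤ α, N.cutoff α β ρ = N.quarterPeriod := fun ρ => N.cutoff_of_le hαβ
  have hφ : ContDiff ℝ ∞ φ := N.contDiff_twist N.contDiff_cutoff hα hplateau
  have hdet (p : ℝ × ℝ) : (fderiv ℝ φ p).det = 1 :=
    N.det_fderiv_twist N.contDiff_cutoff hα hplateau p
  refine ⟨φ, hφ, contDiff_symm_of_det_fderiv_ne_zero (by simp) φ hφ (by simp [hdet]),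
    measurePreserving_of_abs_det_fderiv_eq_one volume φ.bijective (hφ.differentiable (by simp))
      (by simp [hdet]), fun p hp => ?_, fun p hp => ?_⟩
  · exact N.twist_eq_self (N.cutoff_of_ge hαβ hp)
  · exact N.twist_eq_quarterTurn (hplateau _ hp)

end QuarterTurnGauge

section EvenPowerGauge

variable {n : ℕ}

theorem pow_add_pow_pos_of_even (hn : Even n) {p : ℝ × ℝ} (hp : p ≠ 0) : 0 < p.1 ^ n + p.2 ^ n := by
  rcases eq_or_ne p.1 0 with h₁ | h₁
  · have h₂ : p.2 ≠ 0 := fun h₂ => hp (Prod.ext h₁ h₂)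
    exact add_pos_of_nonneg_of_pos (hn.pow_nonneg _) (hn.pow_pos h₂)
  · exact add_pos_of_pos_of_nonneg (hn.pow_pos h₁) (hn.pow_nonneg _)

/-- The `ℓⁿ` norm of the plane, for an even exponent `n`. -/
noncomputable def evenPowerGauge (hn : Even n) (hn₀ : n ≠ 0) : QuarterTurnGauge where
  toFun p := (p.1 ^ n + p.2 ^ n) ^ (n⁻¹ : ℝ)
  continuous := by
    have hinv : (0 : ℝ) ≤ (n : ℝ)⁻¹ := inv_nonneg.2 n.cast_nonneg
    exact ((continuous_fst.pow n).add (continuous_snd.pow n)).rpow_const fun _ => .inr hinv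
  contDiffAt p hp := ((contDiff_fst.pow n).add (contDiff_snd.pow n)).contDiffAt.rpow_const_of_ne
    (pow_add_pow_pos_of_even hn hp).ne'
  pos p hp := Real.rpow_pos_of_pos (pow_add_pow_pos_of_even hn hp) _
  map_smul c hc p := by
    simp only [Prod.smul_fst, Prod.smul_snd, smul_eq_mul, mul_pow, ← mul_add]
    rw [Real.mul_rpow (pow_nonneg hc n) (add_nonneg (hn.pow_nonneg _) (hn.pow_nonneg _)),
      Real.pow_rpow_inv_natCast hc hn₀]
  map_quarterTurn p := by simp only [quarterTurn, hn.neg_pow, add_comm]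

variable (hn : Even n) (hn₀ : n ≠ 0)

theorem evenPowerGauge_nonneg (p : ℝ × ℝ) : 0 ≤ evenPowerGauge hn hn₀ p :=
  Real.rpow_nonneg (add_nonneg (hn.pow_nonneg _) (hn.pow_nonneg _)) _

theorem evenPowerGauge_pow (p : ℝ × ℝ) : evenPowerGauge hn hn₀ p ^ n = p.1 ^ n + p.2 ^ n :=
  Real.rpow_inv_natCast_pow (add_nonneg (hn.pow_nonneg _) (hn.pow_nonneg _)) hn₀

theorem norm_le_evenPowerGauge (p : ℝ × ℝ) : ‖p‖ ≤ evenPowerGauge hn hn₀ p := by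
  refine max_le ?_ ?_ <;>
    refine le_of_pow_le_pow_left₀ hn₀ (evenPowerGauge_nonneg hn hn₀ p) ?_ <;>
    rw [evenPowerGauge_pow, Real.norm_eq_abs, hn.pow_abs]
  · exact le_add_of_nonneg_right (hn.pow_nonneg _)
  · exact le_add_of_nonneg_left (hn.pow_nonneg _)

theorem evenPowerGauge_pow_le (p : ℝ × ℝ) : evenPowerGauge hn hn₀ p ^ n ≤ 2 * ‖p‖ ^ n := by
  have hfst : p.1 ^ n ≤ ‖p‖ ^ n := by
    rw [← hn.pow_abs]; exact pow_le_pow_left₀ (abs_nonneg _) (norm_fst_le p) n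
  have hsnd : p.2 ^ n ≤ ‖p‖ ^ n := by
    rw [← hn.pow_abs]; exact pow_le_pow_left₀ (abs_nonneg _) (norm_snd_le p) n
  rw [evenPowerGauge_pow, two_mul]
  exact add_le_add hfst hsnd

end EvenPowerGauge

section Square

variable {m M : ℝ}

theorem exists_even_two_mul_pow_lt_pow (hm : 0 < m) (hmM : m < M) :
    ∃ n : ℕ, Even n ∧ n ≠ 0 ∧ 2 * m ^ n < M ^ n := by
  have hratio : 1 < M / m := (one_lt_div hm).2 hmM
  obtain ⟨k, hk⟩ := pow_unbounded_of_one_lt 2 hratio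
  refine ⟨2 * (k + 1), even_two_mul _, by simp, ?_⟩
  have hpow : 2 < (M / m) ^ (2 * (k + 1)) :=
    hk.trans_le (pow_le_pow_right₀ hratio.le (by lia))
  rwa [div_pow, lt_div_iff₀ (by positivity)] at hpow

theorem exists_gauge_between_squares (hm : 0 < m) (hmM : m < M) :
    ∃ N : QuarterTurnGauge, ∃ α : ℝ, 0 < α ∧ α < M ∧
      (∀ p, ‖p‖ ≤ N p) ∧ ∀ p, ‖p‖ ≤ m → N p ≤ α := by
  obtain ⟨n, hn, hn₀, hpow⟩ := exists_even_two_mul_pow_lt_pow hm hmM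
  have hα : ((2 * m ^ n) ^ (n⁻¹ : ℝ)) ^ n = 2 * m ^ n :=
    Real.rpow_inv_natCast_pow (by positivity) hn₀
  refine ⟨evenPowerGauge hn hn₀, (2 * m ^ n) ^ (n⁻¹ : ℝ), by positivity,
    lt_of_pow_lt_pow_left₀ n (hm.trans hmM).le (hα.trans_lt hpow),
    norm_le_evenPowerGauge hn hn₀, fun p hp => le_of_pow_le_pow_left₀ hn₀ (by positivity) ?_⟩
  calc evenPowerGauge hn hn₀ p ^ n ≤ 2 * ‖p‖ ^ n := evenPowerGauge_pow_le hn hn₀ p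
    _ ≤ 2 * m ^ n := by gcongr
    _ = _ := hα.symm

theorem exists_areaPreserving_eq_quarterTurn_on_closedBall (hm : 0 < m) (hmM : m < M)
    (c : ℝ × ℝ) :
    ∃ φ : ℝ × ℝ ≃ ℝ × ℝ, ContDiff ℝ ∞ φ ∧ ContDiff ℝ ∞ φ.symm ∧ MeasurePreserving φ ∧
      (∀ p ∉ Metric.closedBall c M, φ p = p) ∧
      ∀ p ∈ Metric.closedBall c m, φ p = quarterTurn (p - c) + c := by
  obtain ⟨N, α, hα, hαM, hnorm, hsquare⟩ := exists_gauge_between_squares hm hmM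
  obtain ⟨ψ, hψ, hψ', hmp, hid, hturn⟩ := N.exists_areaPreserving_eq_quarterTurn hα hαM
  have hsub : ContDiff ℝ ∞ fun p : ℝ × ℝ => p - c := contDiff_id.sub contDiff_const
  refine ⟨((Equiv.subRight c).trans ψ).trans (Equiv.addRight c),
    (hψ.comp hsub).add contDiff_const, ?_,
    (measurePreserving_add_right volume c).comp (hmp.comp (measurePreserving_sub_right volume c)),
    fun p hp => ?_, fun p hp => ?_⟩
  · exact (hψ'.comp hsub).add contDiff_const
  · rw [Metric.mem_closedBall, not_le, dist_eq_norm] at hp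
    simp [hid (p - c) (hp.le.trans (hnorm _))]
  · rw [Metric.mem_closedBall, dist_eq_norm] at hp
    simp [hturn (p - c) (hsquare _ hp)]

end Square

/-- quasi-rotation: for every `ε ∈ (0, 1/4)` there is a `C^∞`
diffeomorphism `φ_ε` of `ℝ²` which maps the unit square `[0,1]²` onto itself, preserves
two-dimensional Lebesgue measure, equals the identity outside `[ε, 1-ε]²`, and coincides
on `[2ε, 1-2ε]²` with the rotation by `π/2` about the center `(1/2, 1/2)` of the square,
i.e. with `(x,y) ↦ (1-y, x)`. -/
theorem stmt19 (ε : ℝ) (hε0 : 0 < ε) (hε : ε < 1 / 4) :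
    ∃ φ φinv : ℝ × ℝ → ℝ × ℝ,
      ContDiff ℝ (⊤ : ℕ∞) φ ∧ ContDiff ℝ (⊤ : ℕ∞) φinv ∧
      Function.LeftInverse φinv φ ∧ Function.RightInverse φinv φ ∧
      φ '' (Set.Icc (0 : ℝ) 1 ×ˢ Set.Icc (0 : ℝ) 1) = Set.Icc (0 : ℝ) 1 ×ˢ Set.Icc (0 : ℝ) 1 ∧
      MeasurePreserving φ (volume : Measure (ℝ × ℝ)) volume ∧
      (∀ p : ℝ × ℝ, p ∉ Set.Icc ε (1 - ε) ×ˢ Set.Icc ε (1 - ε) → φ p = p) ∧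
      (∀ p ∈ Set.Icc (2 * ε) (1 - 2 * ε) ×ˢ Set.Icc (2 * ε) (1 - 2 * ε),
        φ p = (1 - p.2, p.1)) := by
  have hball (r : ℝ) :
      Icc r (1 - r) ×ˢ Icc r (1 - r) = Metric.closedBall ((1 / 2, 1 / 2) : ℝ × ℝ) (1 / 2 - r) := by
    rw [← closedBall_prod_same, Real.closedBall_eq_Icc]
    ring_nf
  obtain ⟨φ, hφ, hφ', hmp, hid, hturn⟩ :=
    exists_areaPreserving_eq_quarterTurn_on_closedBall (m := 1 / 2 - 2 * ε) (M := 1 / 2 - ε)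
      (by linarith) (by linarith) (1 / 2, 1 / 2)
  rw [← hball] at hid hturn
  have hsub : Icc ε (1 - ε) ⊆ Icc 0 1 := Icc_subset_Icc hε0.le (by linarith)
  refine ⟨φ, φ.symm, hφ, hφ', φ.left_inv, φ.right_inv, image_perm fun p hp => ?_, hmp, hid,
    fun p hp => ?_⟩
  · exact prod_mono hsub hsub (not_imp_comm.1 (hid p) hp)
  · rw [hturn p hp]
    exact Prod.ext (by simp only [quarterTurn, Prod.fst_add, Prod.snd_sub]; ring)
      (sub_add_cancel p.1 _)
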